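/- Let (W,S) be the Coxeter system of type A_n with n ≤ 6, i.e. W = S_{n+1} is the symmetric group on {1,…,n+1} with S the set of adjacent transpositions s_i = (i,i+1). Then f_W is defined on every element of W and every element of W is separated, i.e. σ(W) = W. -/

import Mathlib

noncomputable section

open scoped Classical

namespace KLPaper

variable {W : Type*} [Group W]

/-- The word length of `w` with respect to the generating set `S`:
the minimal length of an expression of `w` as a product of elements of `S`. -/
def wordLength (S : Set W) (w : W) : ℕ :=
  sInf {k | ∃ l : List W, l.length = k ∧ (∀ x ∈ l, x ∈ S) ∧ l.prod = w}

/-- A reflection: a conjugate of a simple reflection. -/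
def IsReflection (S : Set W) (t : W) : Prop :=
  ∃ w : W, ∃ s ∈ S, t = w * s * w⁻¹

/-- One step in the Bruhat order. -/
def bruhatStep (S : Set W) (a b : W) : Prop :=
  ∃ t, IsReflection S t ∧ b = a * t ∧ wordLength S a < wordLength S b

/-- The strict Bruhat order on `(W, S)`. -/
def bruhatLT (S : Set W) : W → W → Prop := Relation.TransGen (bruhatStep S)

/-- The Bruhat order on `(W, S)`. -/
def bruhatLE (S : Set W) : W → W → Prop := Relation.ReflTransGen (bruhatStep S)

/-- The underlying module of the Hecke algebra: the free `ℤ[v,v⁻¹]`-module on `W`. -/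
abbrev HMod (W : Type*) := W →₀ LaurentPolynomial ℤ

/-- The standard basis element `H_w` of the Hecke algebra. -/
def std (w : W) : HMod W := Finsupp.single w 1

/-- All of the data of the Hecke algebra of `(W, S)` together with its
Kazhdan-Lusztig basis:  the (unique) multiplication making the free module
`HMod W` into an associative `ℤ[v,v⁻¹]`-algebra with the defining relations of the
Hecke algebra, the bar involution, and the (unique) Kazhdan-Lusztig basis `klb`. -/
structure KLData (S : Set W) where
  /-- The Hecke algebra multiplication. -/
  mul : HMod W → HMod W → HMod W
  mul_add_left : ∀ a b c : HMod W, mul (a + b) c = mul a c + mul b c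
  mul_add_right : ∀ a b c : HMod W, mul a (b + c) = mul a b + mul a c
  mul_smul_left : ∀ (r : LaurentPolynomial ℤ) (a b : HMod W), mul (r • a) b = r • mul a b
  mul_smul_right : ∀ (r : LaurentPolynomial ℤ) (a b : HMod W), mul a (r • b) = r • mul a b
  mul_assoc : ∀ a b c : HMod W, mul (mul a b) c = mul a (mul b c)
  one_mul : ∀ a : HMod W, mul (std 1) a = a
  mul_one : ∀ a : HMod W, mul a (std 1) = a
  /-- `H_s H_w = H_{sw}` if `sw > w`. -/
  mul_gen_of_lt : ∀ s ∈ S, ∀ w : W, bruhatLT S w (s * w) →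
    mul (std s) (std w) = std (s * w)
  /-- `H_s H_w = (v - v⁻¹) H_w + H_{sw}` if `sw < w`. -/
  mul_gen_of_gt : ∀ s ∈ S, ∀ w : W, bruhatLT S (s * w) w →
    mul (std s) (std w) =
      ((LaurentPolynomial.T 1 : LaurentPolynomial ℤ) - LaurentPolynomial.T (-1)) • std w + std (s * w)
  /-- The inverse of the standard basis element `H_w`. -/
  sinv : W → HMod W
  mul_sinv : ∀ w : W, mul (std w) (sinv w) = std 1
  sinv_mul : ∀ w : W, mul (sinv w) (std w) = std 1
  /-- The bar involution of the Hecke algebra. -/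
  bar : HMod W → HMod W
  bar_add : ∀ a b : HMod W, bar (a + b) = bar a + bar b
  bar_smul : ∀ (r : LaurentPolynomial ℤ) (a : HMod W),
    bar (r • a) = (LaurentPolynomial.invert (R := ℤ) r) • bar a
  bar_mul : ∀ a b : HMod W, bar (mul a b) = mul (bar a) (bar b)
  /-- The bar involution sends `H_w` to `(H_{w⁻¹})⁻¹`. -/
  bar_std : ∀ w : W, bar (std w) = sinv w⁻¹
  /-- The Kazhdan-Lusztig basis element `h_w`. -/
  klb : W → HMod W
  klb_bar : ∀ w : W, bar (klb w) = klb w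
  klb_supp : ∀ w x : W, (klb w) x ≠ 0 → bruhatLE S x w
  klb_diag : ∀ w : W, (klb w) w = 1
  klb_lower : ∀ w x : W, x ≠ w → (klb w) x ∈
    Submodule.span ℤ ((fun n : ℤ => (LaurentPolynomial.T n : LaurentPolynomial ℤ)) ''
      {n : ℤ | n < 0})
  /-- The Kazhdan-Lusztig basis elements form a basis: unique expansion. -/
  klb_basis : ∀ h : HMod W, ∃! c : W →₀ LaurentPolynomial ℤ,
    h = c.sum fun x a => a • klb x

variable {S : Set W}

/-- The KL-support of an element of the Hecke algebra: the set of `x` such that the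
coefficient of `h_x` in the (unique) expansion in the Kazhdan-Lusztig basis is nonzero. -/
def suppKL (K : KLData S) (h : HMod W) : Set W :=
  {x | ∀ c : W →₀ LaurentPolynomial ℤ, h = (c.sum fun y a => a • K.klb y) → c x ≠ 0}

/-- `ˢZ = {x ∈ Z | sx > x}`. -/
def upLeft (S : Set W) (s : W) (Z : Set W) : Set W := {x ∈ Z | bruhatLT S x (s * x)}

/-- `Zˢ = {x ∈ Z | xs > x}`. -/
def upRight (S : Set W) (t : W) (Z : Set W) : Set W := {x ∈ Z | bruhatLT S x (x * t)}

/-- Fuel-based auxiliary definition of the partial function `f_W`, computed by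
induction on the Bruhat order (the fuel is the length). -/
def fAux (K : KLData S) : ℕ → W → Option (Set W)
  | 0, x => if x = 1 then some {(1 : W)} else none
  | n + 1, x =>
    if x = 1 then some {(1 : W)} else
    if (∃ s ∈ S, bruhatLT S (s * x) x ∧
          ∃ G : Set W, fAux K n (s * x) = some G ∧ upLeft S s G = G) ∨
       (∃ t ∈ S, bruhatLT S (x * t) x ∧
          ∃ G : Set W, fAux K n (x * t) = some G ∧ upRight S t G = G) then
      some
        ((⋂ s ∈ S, ⋂ G ∈ {G : Set W | bruhatLT S (s * x) x ∧
              fAux K n (s * x) = some G ∧ upLeft S s G = G},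
            ⋃ w ∈ G, suppKL K (K.mul (K.klb s) (K.klb w))) ∩
         (⋂ t ∈ S, ⋂ G ∈ {G : Set W | bruhatLT S (x * t) x ∧
              fAux K n (x * t) = some G ∧ upRight S t G = G},
            ⋃ w ∈ G, suppKL K (K.mul (K.klb w) (K.klb t))))
    else none

/-- The partial function `f_W` from `W` to subsets of `W`; the value `none` means that
`f_W` is not defined at the given element. -/
def fW (K : KLData S) (x : W) : Option (Set W) := fAux K (wordLength S x) x

/-- `x` is separated if `f_W` is defined at `x` with value `{x}`. -/
def Separated (K : KLData S) (x : W) : Prop := fW K x = some {x}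

/-- The set `σ(W)` of separated elements. -/
def sigma' (K : KLData S) : Set W := {x | Separated K x}

end KLPaper

/-!
Suppose `f_W` takes the value `{z}` at every `z` shorter than `x`. Then `f_W(x)` consists of `x`
and of the `y` such that every (left or right) descent `s` of `x` is one of `y`, with
`μ(y, sx) ≠ 0`, respectively `μ(y, xs) ≠ 0`; here `μ` is the coefficient of `v⁻¹` in `h_{y,w}`.
It remains to see that no such obstruction `y ≠ x` exists in `S_{n+1}` for `n ≤ 6`.

The word of an obstruction `y` lies below that of `x` in the rank order, its length has the parity
of that of `x`, and it has descents wherever `x` does; by the braid relations it even has descents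
at `i` and `i + 1` as soon as `x (i + 2) < x i`. For the remaining pairs of words a finite search
finds a descent `s` of `x` for which `μ(y, xs) = 0` by elementary properties of `μ`: if a descent
of `w` is not one of `y`, then `μ(y, w) ≠ 0` only for `w = yt` with that descent `t`; and the
expansion of `h_v h_r` computes `μ(y, vr)` from data for the shorter element `v`.
-/

namespace KLPaper

open LaurentPolynomial

section Laurent

variable {R : Type*} [Semiring R]

theorem coeff_T_mul (k : ℤ) (p : R[T;T⁻¹]) (n : ℤ) : (T k * p).coeff n = p.coeff (n - k) := by
  rw [T, AddMonoidAlgebra.coeff_single_mul_eq_mul_coeff (n - k), _root_.one_mul]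
  intro m _
  constructor <;> intro h <;> omega

theorem coeff_C_mul (r : R) (p : R[T;T⁻¹]) (n : ℤ) : (C r * p).coeff n = r * p.coeff n := by
  rw [← smul_eq_C_mul]
  exact AddMonoidAlgebra.coeff_smul_apply r p n

theorem C_eq_zero_iff {r : R} : (C r : R[T;T⁻¹]) = 0 ↔ r = 0 := by
  refine ⟨fun h => ?_, fun h => by rw [h, map_zero]⟩
  simpa only [C_apply, if_true, AddMonoidAlgebra.coeff_zero, Finsupp.zero_apply] using
    congrArg (fun p : R[T;T⁻¹] => p.coeff 0) h

theorem coeff_one (n : ℤ) : (1 : R[T;T⁻¹]).coeff n = if n = 0 then 1 else 0 := by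
  rw [← T_zero, T_apply]
  simp only [eq_comm]

theorem coeff_eq_zero_of_mem_span {p : R[T;T⁻¹]} {E : Set ℤ} {n : ℤ} (hn : n ∉ E)
    (hp : p ∈ Submodule.span R ((fun m : ℤ => (T m : R[T;T⁻¹])) '' E)) : p.coeff n = 0 := by
  induction hp using Submodule.span_induction with
  | mem x hx =>
    obtain ⟨m, hm, rfl⟩ := hx
    rw [T_apply, if_neg (ne_of_mem_of_not_mem hm hn)]
  | zero => rfl
  | add x y _ _ hx hy => rw [AddMonoidAlgebra.coeff_add, Finsupp.add_apply, hx, hy, add_zero]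
  | smul r x _ hx => rw [AddMonoidAlgebra.coeff_smul_apply, hx, smul_zero]

end Laurent

/-- The properties of a Coxeter system `(W, S)` on which the development rests: `S` consists of
involutions, generates `W`, and is sent to `-1` by a sign character. -/
structure SignedGenerators {W : Type*} [Group W] (S : Set W) : Prop where
  mul_self : ∀ s ∈ S, s * s = 1
  closure_eq_top : Submonoid.closure S = ⊤
  exists_sign : ∃ ε : W →* ℤˣ, ∀ s ∈ S, ε s = -1

section Length

variable {W : Type*} [Group W] {S : Set W}

theorem wordLength_prod_le {l : List W} (hl : ∀ x ∈ l, x ∈ S) : wordLength S l.prod ≤ l.length :=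
  Nat.sInf_le ⟨l, rfl, hl, rfl⟩

theorem wordLength_one : wordLength S (1 : W) = 0 :=
  Nat.le_zero.1 (wordLength_prod_le (l := []) (by simp))

theorem wordLength_le_one {s : W} (hs : s ∈ S) : wordLength S s ≤ 1 := by
  simpa using wordLength_prod_le (l := [s]) (by simpa using hs)

theorem wordLength_lt_of_bruhatLT {x y : W} (h : bruhatLT S x y) :
    wordLength S x < wordLength S y := by
  induction h with
  | single h => obtain ⟨_, _, _, h⟩ := h; exact h
  | tail _ h ih => obtain ⟨_, _, _, h⟩ := h; exact ih.trans h

theorem bruhatLE.eq_or_wordLength_lt {x y : W} (h : bruhatLE S x y) :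
    x = y ∨ wordLength S x < wordLength S y :=
  (Relation.reflTransGen_iff_eq_or_transGen.1 h).imp Eq.symm wordLength_lt_of_bruhatLT

theorem bruhatLT_mul_right_iff {s : W} (hs : s ∈ S) (w : W) :
    bruhatLT S w (w * s) ↔ wordLength S w < wordLength S (w * s) :=
  ⟨wordLength_lt_of_bruhatLT, fun h => .single ⟨s, ⟨1, s, hs, by group⟩, rfl, h⟩⟩

theorem bruhatLT_mul_left_iff {s : W} (hs : s ∈ S) (w : W) :
    bruhatLT S w (s * w) ↔ wordLength S w < wordLength S (s * w) :=
  ⟨wordLength_lt_of_bruhatLT,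
    fun h => .single ⟨w⁻¹ * s * w, ⟨w⁻¹, s, hs, by group⟩, by group, h⟩⟩

namespace SignedGenerators

theorem inv_eq (hS : SignedGenerators S) {s : W} (hs : s ∈ S) : s⁻¹ = s :=
  inv_eq_of_mul_eq_one_left (hS.mul_self s hs)

theorem mul_mul_cancel_left (hS : SignedGenerators S) {s : W} (hs : s ∈ S) (w : W) :
    s * (s * w) = w := by
  rw [← mul_assoc, hS.mul_self s hs, one_mul]

theorem mul_mul_cancel_right (hS : SignedGenerators S) {s : W} (hs : s ∈ S) (w : W) :
    w * s * s = w := by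
  rw [mul_assoc, hS.mul_self s hs, mul_one]

theorem exists_reduced_word (hS : SignedGenerators S) (w : W) :
    ∃ l : List W, l.length = wordLength S w ∧ (∀ x ∈ l, x ∈ S) ∧ l.prod = w := by
  obtain ⟨l, hl, hlw⟩ := Submonoid.exists_list_of_mem_closure
    (hS.closure_eq_top ▸ Submonoid.mem_top w : w ∈ Submonoid.closure S)
  exact Nat.sInf_mem (s := {k | ∃ l : List W, l.length = k ∧ (∀ x ∈ l, x ∈ S) ∧ l.prod = w})
    ⟨l.length, l, rfl, hl, hlw⟩

theorem eq_one_of_wordLength_eq_zero (hS : SignedGenerators S) {w : W}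
    (h : wordLength S w = 0) : w = 1 := by
  obtain ⟨l, hl, -, rfl⟩ := hS.exists_reduced_word w
  rw [h, List.length_eq_zero_iff] at hl
  rw [hl, List.prod_nil]

theorem wordLength_mul_le (hS : SignedGenerators S) (x y : W) :
    wordLength S (x * y) ≤ wordLength S x + wordLength S y := by
  obtain ⟨l, hl, hlS, hlx⟩ := hS.exists_reduced_word x
  obtain ⟨m, hm, hmS, hmy⟩ := hS.exists_reduced_word y
  rw [← hl, ← hm, ← List.length_append, ← hlx, ← hmy, ← List.prod_append]
  exact wordLength_prod_le fun z hz => (List.mem_append.1 hz).elim (hlS z) (hmS z)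

theorem wordLength_inv_le (hS : SignedGenerators S) (x : W) :
    wordLength S x⁻¹ ≤ wordLength S x := by
  obtain ⟨l, hl, hlS, rfl⟩ := hS.exists_reduced_word x
  have hmap : l.map (·⁻¹) = l :=
    (List.map_congr_left fun s hs => hS.inv_eq (hlS s hs)).trans l.map_id'
  rw [List.prod_inv_reverse, hmap, ← hl, ← List.length_reverse]
  exact wordLength_prod_le fun s hs => hlS s (List.mem_reverse.1 hs)

theorem wordLength_inv (hS : SignedGenerators S) (x : W) :
    wordLength S x⁻¹ = wordLength S x :=
  (hS.wordLength_inv_le x).antisymm (by simpa only [inv_inv] using hS.wordLength_inv_le x⁻¹)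

theorem sign_eq (hS : SignedGenerators S) {ε : W →* ℤˣ} (hε : ∀ s ∈ S, ε s = -1) (w : W) :
    ε w = (-1) ^ wordLength S w := by
  obtain ⟨l, hl, hlS, rfl⟩ := hS.exists_reduced_word w
  rw [← hl, map_list_prod, List.prod_eq_pow_card _ (-1), List.length_map]
  intro z hz
  obtain ⟨s, hs, rfl⟩ := List.mem_map.1 hz
  exact hε s (hlS s hs)

theorem wordLength_mul_left (hS : SignedGenerators S) {s : W} (hs : s ∈ S) (w : W) :
    wordLength S (s * w) = wordLength S w + 1 ∨ wordLength S w = wordLength S (s * w) + 1 := by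
  obtain ⟨ε, hε⟩ := hS.exists_sign
  have upper := hS.wordLength_mul_le s w
  have lower := hS.wordLength_mul_le s (s * w)
  rw [hS.mul_mul_cancel_left hs] at lower
  have hs_le := wordLength_le_one hs
  have hne : wordLength S (s * w) ≠ wordLength S w := by
    intro h
    have hsign := map_mul ε s w
    rw [hS.sign_eq hε, h, ← hS.sign_eq hε w, hε s hs, neg_one_mul, eq_comm] at hsign
    exact units_ne_neg_self _ hsign.symm
  omega

theorem wordLength_mul_right (hS : SignedGenerators S) {s : W} (hs : s ∈ S) (w : W) :
    wordLength S (w * s) = wordLength S w + 1 ∨ wordLength S w = wordLength S (w * s) + 1 := by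
  rw [← hS.wordLength_inv (w * s), mul_inv_rev, hS.inv_eq hs, ← hS.wordLength_inv w]
  exact hS.wordLength_mul_left hs w⁻¹

theorem wordLength_eq_one (hS : SignedGenerators S) {s : W} (hs : s ∈ S) :
    wordLength S s = 1 := by
  have := hS.wordLength_mul_left hs 1
  rw [mul_one, wordLength_one] at this
  omega

theorem mul_right_bruhatLT_iff (hS : SignedGenerators S) {s : W} (hs : s ∈ S) (w : W) :
    bruhatLT S (w * s) w ↔ wordLength S (w * s) < wordLength S w := by
  simpa only [hS.mul_mul_cancel_right hs] using bruhatLT_mul_right_iff hs (w * s)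

theorem mul_left_bruhatLT_iff (hS : SignedGenerators S) {s : W} (hs : s ∈ S) (w : W) :
    bruhatLT S (s * w) w ↔ wordLength S (s * w) < wordLength S w := by
  simpa only [hS.mul_mul_cancel_left hs] using bruhatLT_mul_left_iff hs (s * w)

theorem exists_left_descent (hS : SignedGenerators S) {w : W} (hw : w ≠ 1) :
    ∃ s ∈ S, wordLength S (s * w) < wordLength S w := by
  obtain ⟨l, hl, hlS, rfl⟩ := hS.exists_reduced_word w
  cases l with
  | nil => exact absurd List.prod_nil hw
  | cons s l =>
    have hs := hlS s List.mem_cons_self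
    refine ⟨s, hs, ?_⟩
    rw [← hl, List.prod_cons, hS.mul_mul_cancel_left hs, List.length_cons, Nat.lt_succ_iff]
    exact wordLength_prod_le fun x hx => hlS x (List.mem_cons_of_mem s hx)

theorem wordLength_eq (hS : SignedGenerators S) {g : W → ℕ} (hone : g 1 = 0)
    (hle : ∀ w, ∀ s ∈ S, g (w * s) ≤ g w + 1) (hlt : ∀ w ≠ 1, ∃ s ∈ S, g (w * s) < g w) (w : W) :
    wordLength S w = g w := by
  apply le_antisymm
  · induction hk : g w using Nat.strong_induction_on generalizing w with
    | _ k ih =>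
      by_cases hw : w = 1
      · rw [hw, wordLength_one]
        exact Nat.zero_le k
      · obtain ⟨s, hs, hws⟩ := hlt w hw
        have := ih _ (hk ▸ hws) (w * s) rfl
        have := hS.wordLength_mul_right hs w
        omega
  · obtain ⟨l, hl, hlS, rfl⟩ := hS.exists_reduced_word w
    rw [← hl]
    clear hl
    induction l using List.reverseRecOn with
    | nil => rw [List.prod_nil, hone]; exact Nat.zero_le _
    | append_singleton l s ih =>
      rw [List.prod_append, List.prod_singleton, List.length_append, List.length_singleton]
      exact (hle _ s (hlS s (by simp))).trans
        (Nat.add_le_add_right (ih fun x hx => hlS x (List.mem_append_left _ hx)) 1)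

end SignedGenerators

end Length

section Hecke

variable {W : Type*} [Group W] {S : Set W} (K : KLData S)

theorem bar_sub (a b : HMod W) : K.bar (a - b) = K.bar a - K.bar b := by
  rw [eq_sub_iff_add_eq, ← K.bar_add, sub_add_cancel]

theorem bar_sum {ι : Type*} (s : Finset ι) (f : ι → HMod W) :
    K.bar (∑ i ∈ s, f i) = ∑ i ∈ s, K.bar (f i) := by
  induction s using Finset.induction_on with
  | empty => simpa using K.bar_add 0 0
  | insert a s ha ih => rw [Finset.sum_insert ha, Finset.sum_insert ha, K.bar_add, ih]

theorem mul_sub_right (a b c : HMod W) : K.mul a (b - c) = K.mul a b - K.mul a c := by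
  rw [eq_sub_iff_add_eq, ← K.mul_add_right, sub_add_cancel]

theorem eq_or_wordLength_lt_of_klb_ne_zero {w y : W} (h : K.klb w y ≠ 0) :
    y = w ∨ wordLength S y < wordLength S w :=
  (K.klb_supp w y h).eq_or_wordLength_lt

theorem coeff_klb_of_nonneg {w y : W} {n : ℤ} (hn : 0 ≤ n) :
    (K.klb w y).coeff n = if y = w ∧ n = 0 then 1 else 0 := by
  by_cases h : y = w
  · rw [h, K.klb_diag, coeff_one]
    simp
  · rw [coeff_eq_zero_of_mem_span (E := {m | m < 0}) hn.not_gt (K.klb_lower w y h),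
      if_neg fun h' => h h'.1]

theorem coeff_sum_C_smul_klb (s : Finset W) (f : W → ℤ) (y : W) {n : ℤ} (hn : 0 ≤ n) :
    ((∑ z ∈ s, (C (f z) : ℤ[T;T⁻¹]) • K.klb z) y).coeff n =
      if y ∈ s ∧ n = 0 then f y else 0 := by
  simp only [Finsupp.finsetSum_apply, Finsupp.smul_apply, smul_eq_mul,
    AddMonoidAlgebra.coeff_sum, Finsupp.finsetSum_apply, coeff_C_mul, coeff_klb_of_nonneg K hn,
    mul_ite, mul_one, mul_zero, ite_and, Finset.sum_ite_eq]

/-- At a longest element of the Kazhdan–Lusztig support of `a`, the coefficient is `a x`; being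
bar-invariant with only negative degrees, it vanishes. -/
theorem eq_zero_of_bar_eq {a : HMod W} (hbar : K.bar a = a)
    (hneg : ∀ x n, 0 ≤ n → (a x).coeff n = 0) : a = 0 := by
  obtain ⟨c, hc, hunique⟩ := K.klb_basis a
  have hc_inv (x : W) : invert (c x) = c x := by
    have : c.mapRange invert (map_zero (invert (R := ℤ))) = c := by
      apply hunique
      rw [Finsupp.sum_mapRange_index fun x => zero_smul _ (K.klb x), ← hbar, hc, Finsupp.sum,
        bar_sum]
      exact Finset.sum_congr rfl fun x _ => by rw [K.bar_smul, K.klb_bar]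
    exact DFunLike.congr_fun this x
  rcases c.support.eq_empty_or_nonempty with hempty | hnonempty
  · rw [hc, Finsupp.support_eq_empty.1 hempty, Finsupp.sum_zero_index]
  obtain ⟨x, hx, hmax⟩ := c.support.exists_max_image (wordLength S) hnonempty
  have hax : a x = c x := by
    rw [hc, Finsupp.sum, Finsupp.finsetSum_apply, Finset.sum_eq_single x, Finsupp.smul_apply,
      K.klb_diag, smul_eq_mul, mul_one]
    · intro y hy hyx
      have : K.klb y x = 0 := by
        by_contra h
        exact ((eq_or_wordLength_lt_of_klb_ne_zero K h).resolve_left hyx.symm).not_ge (hmax y hy)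
      rw [Finsupp.smul_apply, this, smul_zero]
    · exact absurd hx
  refine absurd (LaurentPolynomial.ext fun n => ?_) (Finsupp.mem_support_iff.1 hx)
  rcases le_total 0 n with h | h
  · rw [← hax, hneg x n h]
    rfl
  · rw [← hc_inv x, invert_apply, ← hax, hneg x (-n) (neg_nonneg.2 h)]
    rfl

theorem bar_std_one : K.bar (std 1) = std 1 := by
  rw [K.bar_std, inv_one, ← K.one_mul (K.sinv 1), K.mul_sinv]

variable {K}

theorem std_mul_std_self (hS : SignedGenerators S) {s : W} (hs : s ∈ S) :
    K.mul (std s) (std s) = ((T 1 : ℤ[T;T⁻¹]) - T (-1)) • std s + std 1 := by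
  have h := K.mul_gen_of_gt s hs s (by
    rw [hS.mul_left_bruhatLT_iff hs, hS.mul_self s hs, wordLength_one, hS.wordLength_eq_one hs]
    exact one_pos)
  rwa [hS.mul_self s hs] at h

theorem sinv_of_mem (hS : SignedGenerators S) {s : W} (hs : s ∈ S) :
    K.sinv s = std s - ((T 1 : ℤ[T;T⁻¹]) - T (-1)) • std 1 := by
  have h : K.mul (std s) (std s - ((T 1 : ℤ[T;T⁻¹]) - T (-1)) • std 1) = std 1 := by
    rw [mul_sub_right, std_mul_std_self hS hs, K.mul_smul_right, K.mul_one, add_sub_cancel_left]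
  have h' := congrArg (K.mul (K.sinv s)) h
  rwa [← K.mul_assoc, K.sinv_mul, K.one_mul, K.mul_one, eq_comm] at h'

theorem klb_of_mem (hS : SignedGenerators S) {s : W} (hs : s ∈ S) :
    K.klb s = std s + (T (-1) : ℤ[T;T⁻¹]) • std 1 := by
  rw [← sub_eq_zero]
  apply eq_zero_of_bar_eq K
  · rw [bar_sub, K.klb_bar, K.bar_add, K.bar_smul, bar_std_one, K.bar_std, hS.inv_eq hs,
      sinv_of_mem hS hs, invert_T, neg_neg, sub_smul]
    abel
  · intro x n hn
    have hstd (w : W) : ((std w : HMod W) x).coeff n = if x = w ∧ n = 0 then 1 else 0 := by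
      rw [std, Finsupp.single_apply]
      split_ifs <;> simp_all [coeff_one]
    have hone : ((T (-1) * (std 1 : HMod W) x : ℤ[T;T⁻¹])).coeff n = 0 := by
      rw [coeff_T_mul, std, Finsupp.single_apply]
      split_ifs
      · rw [coeff_one, if_neg (by omega)]
      · rfl
    rw [Finsupp.sub_apply, Finsupp.add_apply, Finsupp.smul_apply, smul_eq_mul,
      AddMonoidAlgebra.coeff_sub, AddMonoidAlgebra.coeff_add, Finsupp.sub_apply,
      Finsupp.add_apply, coeff_klb_of_nonneg K hn, hstd, hone, add_zero, sub_self]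

theorem std_mul_std_of_lt (hS : SignedGenerators S) {t : W} (ht : t ∈ S) {w : W}
    (hw : wordLength S w < wordLength S (w * t)) : K.mul (std w) (std t) = std (w * t) := by
  induction hk : wordLength S w generalizing w with
  | zero => rw [hS.eq_one_of_wordLength_eq_zero hk, K.one_mul, one_mul]
  | succ k ih =>
    obtain ⟨s, hs, hsw⟩ := hS.exists_left_descent (w := w) (by
      rintro rfl
      simp [wordLength_one] at hk)
    have hw_eq := hS.mul_mul_cancel_left hs w
    have hwt_eq : s * (s * w * t) = w * t := by rw [← mul_assoc, hw_eq]
    have := hS.wordLength_mul_left hs w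
    have hswt := hS.wordLength_mul_left hs (s * w * t)
    have := hS.wordLength_mul_right ht (s * w)
    rw [hwt_eq] at hswt
    have hw_mul := K.mul_gen_of_lt s hs (s * w) (by
      rw [bruhatLT_mul_left_iff hs, hw_eq]
      exact hsw)
    have hwt_mul := K.mul_gen_of_lt s hs (s * w * t) (by
      rw [bruhatLT_mul_left_iff hs, hwt_eq]
      omega)
    rw [hw_eq] at hw_mul
    rw [← hw_mul, K.mul_assoc, ih (by omega) (by omega), hwt_mul, hwt_eq]

theorem std_mul_std_of_gt (hS : SignedGenerators S) {t : W} (ht : t ∈ S) {w : W}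
    (hw : wordLength S (w * t) < wordLength S w) :
    K.mul (std w) (std t) = ((T 1 : ℤ[T;T⁻¹]) - T (-1)) • std w + std (w * t) := by
  have h := std_mul_std_of_lt (K := K) hS ht (w := w * t) (by
    rwa [hS.mul_mul_cancel_right ht])
  rw [hS.mul_mul_cancel_right ht] at h
  nth_rw 1 [← h]
  rw [K.mul_assoc, std_mul_std_self hS ht, K.mul_add_right, K.mul_smul_right, h, K.mul_one]

end Hecke

section GenMul

variable {W : Type*} [Group W] {S : Set W}

/-- The coefficient of `v⁻¹` in `h_{z,w}`: the Kazhdan–Lusztig `μ`-function, not symmetrised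
(it vanishes unless `z` is shorter than `w`). -/
def mu (K : KLData S) (z w : W) : ℤ := (K.klb w z).coeff (-1)

theorem klb_ne_zero_of_mu_ne_zero {K : KLData S} {z w : W} (h : mu K z w ≠ 0) :
    K.klb w z ≠ 0 := by
  intro h₀
  rw [mu, h₀] at h
  exact h rfl

theorem wordLength_lt_of_mu_ne_zero {K : KLData S} {z w : W} (h : mu K z w ≠ 0) :
    wordLength S z < wordLength S w := by
  refine (eq_or_wordLength_lt_of_klb_ne_zero K (klb_ne_zero_of_mu_ne_zero h)).resolve_left ?_
  rintro rfl
  rw [mu, K.klb_diag, coeff_one, if_neg (by decide)] at h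
  exact h rfl

/-- Multiplication by a Kazhdan–Lusztig generator `h_s` on one of the two sides: `op` is the
induced operator on the Hecke algebra and `act` the corresponding multiplication by `s` in `W`.
It lets left and right multiplication be treated at once. -/
structure GenMul (K : KLData S) where
  act : W → W
  op : HMod W →ₗ[ℤ[T;T⁻¹]] HMod W
  bar_op : ∀ h, K.bar (op h) = op (K.bar h)
  act_act : ∀ x, act (act x) = x
  wordLength_act : ∀ x, wordLength S (act x) = wordLength S x + 1 ∨
    wordLength S x = wordLength S (act x) + 1
  op_std : ∀ x, op (std x) = std (act x) +
    (if wordLength S (act x) < wordLength S x then T 1 else T (-1) : ℤ[T;T⁻¹]) • std x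

namespace GenMul

variable {K : KLData S} (a b : GenMul K)

/-- Left multiplication by `h_s`. -/
def left (hS : SignedGenerators S) (K : KLData S) {s : W} (hs : s ∈ S) : GenMul K where
  act x := s * x
  op :=
    { toFun := K.mul (K.klb s)
      map_add' := K.mul_add_right _
      map_smul' := fun r => K.mul_smul_right r _ }
  bar_op h := by
    change K.bar (K.mul _ _) = K.mul _ _
    rw [K.bar_mul, K.klb_bar]
  act_act := hS.mul_mul_cancel_left hs
  wordLength_act := hS.wordLength_mul_left hs
  op_std x := by
    change K.mul (K.klb s) (std x) = _
    rw [klb_of_mem hS hs, K.mul_add_left, K.mul_smul_left, K.one_mul]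
    rcases hS.wordLength_mul_left hs x with h | h
    · rw [K.mul_gen_of_lt s hs x ((bruhatLT_mul_left_iff hs x).2 (by omega)), if_neg (by omega)]
    · rw [K.mul_gen_of_gt s hs x ((hS.mul_left_bruhatLT_iff hs x).2 (by omega)),
        if_pos (by omega), sub_smul]
      abel

/-- Right multiplication by `h_s`. -/
def right (hS : SignedGenerators S) (K : KLData S) {s : W} (hs : s ∈ S) : GenMul K where
  act x := x * s
  op :=
    { toFun := fun h => K.mul h (K.klb s)
      map_add' := fun h h' => K.mul_add_left h h' _
      map_smul' := fun r h => K.mul_smul_left r h _ }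
  bar_op h := by
    change K.bar (K.mul _ _) = K.mul _ _
    rw [K.bar_mul, K.klb_bar]
  act_act := hS.mul_mul_cancel_right hs
  wordLength_act := hS.wordLength_mul_right hs
  op_std x := by
    change K.mul (std x) (K.klb s) = _
    rw [klb_of_mem hS hs, K.mul_add_right, K.mul_smul_right, K.mul_one]
    rcases hS.wordLength_mul_right hs x with h | h
    · rw [std_mul_std_of_lt hS hs (by omega), if_neg (by omega)]
    · rw [std_mul_std_of_gt hS hs (by omega), if_pos (by omega), sub_smul]
      abel

/-- The generator is a descent of `x` (on the side on which it acts). -/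
def Descent (x : W) : Prop := wordLength S (a.act x) < wordLength S x

/-- The eigenvalue `v` or `v⁻¹` by which `H_x` contributes to its own image, according to whether
the generator is a descent of `x`. -/
def weight (x : W) : ℤ[T;T⁻¹] := if a.Descent x then T 1 else T (-1)

variable {a b}

theorem act_eq_iff {x y : W} : a.act x = y ↔ x = a.act y :=
  ⟨fun h => by rw [← h, a.act_act], fun h => by rw [h, a.act_act]⟩

theorem descent_iff {x : W} : a.Descent x ↔ wordLength S x = wordLength S (a.act x) + 1 := by
  have := a.wordLength_act x
  unfold Descent
  omega

theorem not_descent_iff {x : W} :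
    ¬ a.Descent x ↔ wordLength S (a.act x) = wordLength S x + 1 := by
  have := a.wordLength_act x
  unfold Descent
  omega

theorem descent_act_iff {x : W} : a.Descent (a.act x) ↔ ¬ a.Descent x := by
  rw [descent_iff, not_descent_iff, a.act_act]

theorem weight_of_descent {x : W} (hx : a.Descent x) : a.weight x = T 1 := if_pos hx

theorem weight_of_not_descent {x : W} (hx : ¬ a.Descent x) : a.weight x = T (-1) := if_neg hx

theorem op_std_eq (x : W) : a.op (std x) = std (a.act x) + a.weight x • std x := by
  rw [a.op_std, weight]
  congr

theorem op_apply (h : HMod W) (y : W) : a.op h y = h (a.act y) + a.weight y * h y := by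
  induction h using Finsupp.induction_linear with
  | zero => rw [map_zero]; simp
  | add f g hf hg =>
    rw [map_add, Finsupp.add_apply, hf, hg]
    simp only [Finsupp.add_apply]
    ring
  | single w r =>
    have hop : a.op (Finsupp.single w r) = r • (std (a.act w) + a.weight w • std w) := by
      rw [← mul_one r, ← smul_eq_mul, ← Finsupp.smul_single, map_smul, smul_eq_mul, mul_one]
      exact congrArg (r • ·) (op_std_eq w)
    rw [hop]
    simp only [Finsupp.smul_apply, Finsupp.add_apply, std, Finsupp.single_apply, smul_eq_mul,
      act_eq_iff]
    by_cases h : w = y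
    · subst h
      split_ifs <;> ring
    · simp [h]

theorem op_op (h : HMod W) : a.op (a.op h) = ((T 1 : ℤ[T;T⁻¹]) + T (-1)) • a.op h := by
  have hT : (T 1 : ℤ[T;T⁻¹]) * T (-1) = 1 := by rw [← T_add, add_neg_cancel, T_zero]
  ext1 y
  simp only [op_apply, a.act_act, Finsupp.smul_apply, smul_eq_mul]
  by_cases hy : a.Descent y
  · rw [weight_of_descent hy, weight_of_not_descent (descent_act_iff.not.2 (not_not.2 hy))]
    linear_combination -(h y) * hT
  · rw [weight_of_not_descent hy, weight_of_descent (descent_act_iff.2 hy)]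
    linear_combination -(h y) * hT

variable (a) in
/-- The elements other than `a.act w` of the Kazhdan–Lusztig support of `a.op (h_w)`, for `w`
without the descent `a`. -/
def lowerTerms (w : W) : Finset W :=
  {z ∈ (K.klb w).support | a.Descent z ∧ mu K z w ≠ 0}

theorem mem_lowerTerms {w z : W} : z ∈ a.lowerTerms w ↔ a.Descent z ∧ mu K z w ≠ 0 := by
  rw [lowerTerms, Finset.mem_filter, Finsupp.mem_support_iff, and_iff_right_iff_imp]
  exact fun h => klb_ne_zero_of_mu_ne_zero h.2

theorem op_klb_of_not_descent {w : W} (hw : ¬ a.Descent w) :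
    a.op (K.klb w) = K.klb (a.act w) +
      ∑ z ∈ a.lowerTerms w, (C (mu K z w) : ℤ[T;T⁻¹]) • K.klb z := by
  rw [← sub_eq_zero]
  apply eq_zero_of_bar_eq K
  · simp only [bar_sub, K.bar_add, bar_sum, K.bar_smul, a.bar_op, K.klb_bar, invert_C]
  · intro y n hn
    have hweight : (a.weight y * K.klb w y).coeff n =
        if y ∈ a.lowerTerms w ∧ n = 0 then mu K y w else 0 := by
      by_cases hy : a.Descent y
      · have hyw : y ≠ w := fun h => hw (h ▸ hy)
        rw [weight_of_descent hy, coeff_T_mul]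
        rcases eq_or_ne n 0 with rfl | hn₀
        · simp [mem_lowerTerms, hy, mu, eq_comm]
        · rw [coeff_klb_of_nonneg K (by omega), if_neg fun h => hyw h.1, if_neg fun h => hn₀ h.2]
      · rw [weight_of_not_descent hy, coeff_T_mul, coeff_klb_of_nonneg K (by omega),
          if_neg (by omega), if_neg fun h => hy (mem_lowerTerms.1 h.1).1]
    simp only [Finsupp.sub_apply, Finsupp.add_apply, AddMonoidAlgebra.coeff_sub,
      AddMonoidAlgebra.coeff_add, op_apply, coeff_sum_C_smul_klb K _ _ _ hn, hweight,
      coeff_klb_of_nonneg K hn, act_eq_iff, sub_self]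

theorem op_klb_of_descent {w : W} (hw : a.Descent w) :
    a.op (K.klb w) = ((T 1 : ℤ[T;T⁻¹]) + T (-1)) • K.klb w := by
  induction hk : wordLength S w using Nat.strong_induction_on generalizing w with
  | _ k ih =>
    have h := op_klb_of_not_descent (a := a) (w := a.act w) (by rwa [descent_act_iff, not_not])
    rw [a.act_act, ← sub_eq_iff_eq_add] at h
    rw [← h, map_sub, op_op, smul_sub, map_sum, Finset.smul_sum]
    congr 1
    refine Finset.sum_congr rfl fun z hz => ?_
    obtain ⟨hz, hmu⟩ := mem_lowerTerms.1 hz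
    have hlt : wordLength S z < k := hk ▸ (wordLength_lt_of_mu_ne_zero hmu).trans hw
    rw [map_smul, ih _ hlt hz rfl, smul_comm]

theorem coeff_klb_act_of_descent {w y : W} (hw : a.Descent w) (hy : ¬ a.Descent y) (n : ℤ) :
    (K.klb w (a.act y)).coeff n = (K.klb w y).coeff (n - 1) := by
  have h := DFunLike.congr_fun (op_klb_of_descent hw) y
  rw [op_apply, weight_of_not_descent hy, Finsupp.smul_apply, smul_eq_mul, add_mul,
    add_left_inj] at h
  rw [h, coeff_T_mul]

theorem act_eq_of_mu_ne_zero {w y : W} (hw : a.Descent w) (hy : ¬ a.Descent y)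
    (h : mu K y w ≠ 0) : a.act y = w := by
  have hshift := coeff_klb_act_of_descent hw hy 0
  rw [coeff_klb_of_nonneg K le_rfl, zero_sub] at hshift
  by_contra hne
  rw [if_neg fun h' => hne h'.1] at hshift
  exact h hshift.symm

theorem coeff_neg_two_klb {w y : W} (hw : a.Descent w) (hy : ¬ a.Descent y) :
    (K.klb w y).coeff (-2) = mu K (a.act y) w := by
  rw [mu, coeff_klb_act_of_descent hw hy]
  rfl

theorem coeff_klb_act {w : W} (hw : ¬ a.Descent w) (y : W) (n : ℤ) :
    (K.klb (a.act w) y).coeff n = (K.klb w (a.act y)).coeff n +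
      (K.klb w y).coeff (if a.Descent y then n - 1 else n + 1) -
      ∑ z ∈ a.lowerTerms w, mu K z w * (K.klb z y).coeff n := by
  have h := congrArg (fun h : HMod W => (h y).coeff n) (op_klb_of_not_descent hw)
  simp only [op_apply, Finsupp.add_apply, AddMonoidAlgebra.coeff_add, Finsupp.finsetSum_apply,
    AddMonoidAlgebra.coeff_sum, Finsupp.smul_apply, smul_eq_mul, coeff_C_mul] at h
  have hweight : (a.weight y * K.klb w y).coeff n =
      (K.klb w y).coeff (if a.Descent y then n - 1 else n + 1) := by
    unfold weight
    split_ifs <;> rw [coeff_T_mul]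
    rw [sub_neg_eq_add]
  rw [← hweight, h, add_sub_cancel_right]

theorem of_klb_act_ne_zero {w y : W} (hw : ¬ a.Descent w)
    (h : K.klb (a.act w) y ≠ 0) :
    K.klb w (a.act y) ≠ 0 ∨ K.klb w y ≠ 0 ∨ ∃ z, mu K z w ≠ 0 ∧ K.klb z y ≠ 0 := by
  by_contra! hzero
  obtain ⟨hact, hy, hlower⟩ := hzero
  have hop := DFunLike.congr_fun (op_klb_of_not_descent hw) y
  rw [op_apply, hact, hy, mul_zero, add_zero, Finsupp.add_apply, Finsupp.finsetSum_apply,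
    Finset.sum_eq_zero, add_zero] at hop
  · exact h hop.symm
  · intro z hz
    rw [Finsupp.smul_apply, hlower z (mem_lowerTerms.1 hz).2, smul_zero]

theorem mu_act_eq_zero {v y : W} (hv : ¬ a.Descent v) (hy : a.Descent y)
    (hcoeff : (K.klb v y).coeff (-2) = 0) (hmu : mu K (a.act y) v = 0)
    (hbetween : ∀ z, a.Descent z → mu K z v ≠ 0 → K.klb z y ≠ 0 → z = y) :
    mu K y (a.act v) = 0 := by
  have hsum : ∑ z ∈ a.lowerTerms v, mu K z v * (K.klb z y).coeff (-1) = 0 := by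
    refine Finset.sum_eq_zero fun z hz => ?_
    obtain ⟨hz, hzv⟩ := mem_lowerTerms.1 hz
    by_contra hne
    have hzy : mu K y z ≠ 0 := right_ne_zero_of_mul hne
    obtain rfl := hbetween z hz hzv (klb_ne_zero_of_mu_ne_zero hzy)
    exact (wordLength_lt_of_mu_ne_zero hzy).false
  rw [mu, coeff_klb_act hv, if_pos hy, hsum, ← mu, hmu, show (-1 - 1 : ℤ) = -2 from rfl, hcoeff]
  rfl

theorem suppKL_op_klb {w : W} (hw : ¬ a.Descent w) :
    suppKL K (a.op (K.klb w)) = {z | z = a.act w ∨ a.Descent z ∧ mu K z w ≠ 0} := by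
  let c : W →₀ ℤ[T;T⁻¹] :=
    Finsupp.single (a.act w) 1 + ∑ z ∈ a.lowerTerms w, Finsupp.single z (C (mu K z w))
  have hc : a.op (K.klb w) = c.sum fun x p => p • K.klb x := by
    change _ = Finsupp.linearCombination _ K.klb c
    simp [c, op_klb_of_not_descent hw]
  have hmem (z : W) : z ∈ suppKL K (a.op (K.klb w)) ↔ c z ≠ 0 :=
    ⟨fun h => h c hc, fun h d hd => (K.klb_basis _).unique hd hc ▸ h⟩
  have hact : a.act w ∉ a.lowerTerms w := fun h =>
    hw (wordLength_lt_of_mu_ne_zero (mem_lowerTerms.1 h).2)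
  have hcz (z : W) : c z = (if z = a.act w then 1 else 0) +
      if z ∈ a.lowerTerms w then C (mu K z w) else 0 := by
    simp only [c, Finsupp.add_apply, Finsupp.finsetSum_apply, Finsupp.single_apply,
      Finset.sum_ite_eq', eq_comm (a := z)]
  ext z
  rw [hmem, hcz, Set.mem_ofPred_eq, ← mem_lowerTerms]
  by_cases hz : z = a.act w
  · rw [hz, if_pos rfl, if_neg hact, add_zero]
    simp
  · rw [if_neg hz, zero_add, or_iff_right hz]
    by_cases hzw : z ∈ a.lowerTerms w
    · rw [if_pos hzw, Ne, C_eq_zero_iff]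
      exact iff_of_true (mem_lowerTerms.1 hzw).2 hzw
    · simp [hzw]

theorem mem_suppKL_op_klb_act {x y : W} (hx : a.Descent x) :
    y ∈ suppKL K (a.op (K.klb (a.act x))) ↔ y = x ∨ a.Descent y ∧ mu K y (a.act x) ≠ 0 := by
  rw [suppKL_op_klb (by rwa [descent_act_iff, not_not]), a.act_act, Set.mem_ofPred_eq]

theorem descent_of_braid {x y : W}
    (hbraid : ∀ z, a.act (b.act (a.act z)) = b.act (a.act (b.act z))) (hax : a.Descent x)
    (hay : a.Descent y) (hmu : mu K y (a.act x) ≠ 0) (hbax : b.Descent (a.act x))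
    (hb : b.Descent x → b.Descent y) : b.Descent y := by
  by_contra hby
  have hby_eq : b.act y = a.act x := act_eq_of_mu_ne_zero hbax hby hmu
  have hbx_eq : b.act x = a.act (b.act (a.act y)) := by
    rw [← a.act_act x, ← hby_eq, ← a.act_act y, hbraid, b.act_act, a.act_act]
  refine hby (hb ?_)
  rw [Descent, hbx_eq]
  have h₁ := a.wordLength_act (b.act (a.act y))
  have h₂ := b.wordLength_act (a.act y)
  rw [descent_iff] at hax hay
  rw [not_descent_iff, hby_eq] at hby
  omega

end GenMul

end GenMul

section Reduction

variable {W : Type*} [Group W] {S : Set W} {K : KLData S}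

theorem even_of_coeff_klb_ne_zero (hS : SignedGenerators S) {w y : W} {n : ℤ}
    (h : (K.klb w y).coeff n ≠ 0) : Even (n + wordLength S w + wordLength S y) := by
  induction hk : wordLength S w using Nat.strong_induction_on generalizing w y n with
  | _ k ih =>
    have hne : K.klb w y ≠ 0 := by
      rintro h₀
      exact h (by rw [h₀]; rfl)
    by_cases hw : w = 1
    · obtain rfl : y = w := (eq_or_wordLength_lt_of_klb_ne_zero K hne).resolve_right (by
        rw [hw, wordLength_one]
        exact Nat.not_lt_zero _)
      rw [K.klb_diag, coeff_one] at h
      rw [(ite_ne_right_iff.1 h).1, hk, zero_add]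
      exact ⟨_, rfl⟩
    obtain ⟨s, hs, hsw⟩ := hS.exists_left_descent hw
    let a := GenMul.left hS K hs
    have hws : ¬ a.Descent (a.act w) := by
      rwa [GenMul.descent_act_iff, not_not]
    have hlt : wordLength S (a.act w) < k := hk ▸ hsw
    have hwl := a.wordLength_act w
    have hyl := a.wordLength_act y
    rw [← a.act_act w, GenMul.coeff_klb_act hws] at h
    by_cases h₁ : (K.klb (a.act w) (a.act y)).coeff n = 0
    · by_cases h₂ : (K.klb (a.act w) y).coeff (if a.Descent y then n - 1 else n + 1) = 0
      · rw [h₁, h₂, add_zero, zero_sub, neg_ne_zero] at h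
        obtain ⟨z, hz, hzy⟩ := Finset.exists_ne_zero_of_sum_ne_zero h
        have hmu := (GenMul.mem_lowerTerms.1 hz).2
        have heven := ih _ hlt hmu rfl
        have heven' := ih _ ((wordLength_lt_of_mu_ne_zero hmu).trans hlt)
          (right_ne_zero_of_mul hzy) rfl
        grind
      · have heven := ih _ hlt h₂ rfl
        split_ifs at heven <;> grind
    · have heven := ih _ hlt h₁ rfl
      grind

/-- `Obstruction K x y` says that, besides `x` itself, `y` lies in all the Kazhdan–Lusztig
supports whose intersection is `f_W(x)` when the shorter elements are separated. -/
structure Obstruction (K : KLData S) (x y : W) : Prop where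
  ne : y ≠ x
  left : ∀ s ∈ S, wordLength S (s * x) < wordLength S x →
    wordLength S (s * y) < wordLength S y ∧ mu K y (s * x) ≠ 0
  right : ∀ s ∈ S, wordLength S (x * s) < wordLength S x →
    wordLength S (y * s) < wordLength S y ∧ mu K y (x * s) ≠ 0

theorem upLeft_singleton (hS : SignedGenerators S) {s x : W} (hs : s ∈ S)
    (h : wordLength S (s * x) < wordLength S x) : upLeft S s {s * x} = {s * x} :=
  Set.sep_eq_self_iff_mem_true.2 fun z hz => by
    rwa [Set.mem_singleton_iff.1 hz, hS.mul_mul_cancel_left hs, hS.mul_left_bruhatLT_iff hs]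

theorem upRight_singleton (hS : SignedGenerators S) {s x : W} (hs : s ∈ S)
    (h : wordLength S (x * s) < wordLength S x) : upRight S s {x * s} = {x * s} :=
  Set.sep_eq_self_iff_mem_true.2 fun z hz => by
    rwa [Set.mem_singleton_iff.1 hz, hS.mul_mul_cancel_right hs, hS.mul_right_bruhatLT_iff hs]

theorem mem_iInter_left_iff (hS : SignedGenerators S) {k : ℕ} {x y : W}
    (hx : ∀ s ∈ S, wordLength S (s * x) < wordLength S x → fAux K k (s * x) = some {s * x}) :
    (y ∈ ⋂ s ∈ S, ⋂ G ∈ {G : Set W | bruhatLT S (s * x) x ∧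
        fAux K k (s * x) = some G ∧ upLeft S s G = G},
          ⋃ w ∈ G, suppKL K (K.mul (K.klb s) (K.klb w))) ↔
      ∀ s ∈ S, wordLength S (s * x) < wordLength S x →
        y = x ∨ wordLength S (s * y) < wordLength S y ∧ mu K y (s * x) ≠ 0 := by
  simp only [Set.mem_iInter, Set.mem_ofPred_eq]
  refine forall₂_congr fun s hs => ?_
  rw [hS.mul_left_bruhatLT_iff hs]
  constructor
  · intro h hlt
    have hy := h {s * x} ⟨hlt, hx s hs hlt, upLeft_singleton hS hs hlt⟩
    rw [Set.biUnion_singleton] at hy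
    exact ((GenMul.left hS K hs).mem_suppKL_op_klb_act hlt).1 hy
  · rintro h G ⟨hlt, hG, -⟩
    rw [hx s hs hlt, Option.some_inj] at hG
    rw [← hG, Set.biUnion_singleton]
    exact ((GenMul.left hS K hs).mem_suppKL_op_klb_act hlt).2 (h hlt)

theorem mem_iInter_right_iff (hS : SignedGenerators S) {k : ℕ} {x y : W}
    (hx : ∀ s ∈ S, wordLength S (x * s) < wordLength S x → fAux K k (x * s) = some {x * s}) :
    (y ∈ ⋂ s ∈ S, ⋂ G ∈ {G : Set W | bruhatLT S (x * s) x ∧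
        fAux K k (x * s) = some G ∧ upRight S s G = G},
          ⋃ w ∈ G, suppKL K (K.mul (K.klb w) (K.klb s))) ↔
      ∀ s ∈ S, wordLength S (x * s) < wordLength S x →
        y = x ∨ wordLength S (y * s) < wordLength S y ∧ mu K y (x * s) ≠ 0 := by
  simp only [Set.mem_iInter, Set.mem_ofPred_eq]
  refine forall₂_congr fun s hs => ?_
  rw [hS.mul_right_bruhatLT_iff hs]
  constructor
  · intro h hlt
    have hy := h {x * s} ⟨hlt, hx s hs hlt, upRight_singleton hS hs hlt⟩
    rw [Set.biUnion_singleton] at hy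
    exact ((GenMul.right hS K hs).mem_suppKL_op_klb_act hlt).1 hy
  · rintro h G ⟨hlt, hG, -⟩
    rw [hx s hs hlt, Option.some_inj] at hG
    rw [← hG, Set.biUnion_singleton]
    exact ((GenMul.right hS K hs).mem_suppKL_op_klb_act hlt).2 (h hlt)

theorem fW_eq_singleton (hS : SignedGenerators S)
    (hK : ∀ x y : W, x ≠ 1 → ¬ Obstruction K x y) (x : W) : fW K x = some {x} := by
  rw [fW]
  induction hk : wordLength S x generalizing x with
  | zero => rw [hS.eq_one_of_wordLength_eq_zero hk, fAux, if_pos rfl]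
  | succ k ih =>
    have hx : x ≠ 1 := by
      rintro rfl
      simp [wordLength_one] at hk
    have hleft : ∀ s ∈ S, wordLength S (s * x) < wordLength S x →
        fAux K k (s * x) = some {s * x} := fun s hs hlt =>
      ih _ (by have := hS.wordLength_mul_left hs x; omega)
    have hright : ∀ s ∈ S, wordLength S (x * s) < wordLength S x →
        fAux K k (x * s) = some {x * s} := fun s hs hlt =>
      ih _ (by have := hS.wordLength_mul_right hs x; omega)
    obtain ⟨s, hs, hlt⟩ := hS.exists_left_descent hx
    rw [fAux, if_neg hx, if_pos (Or.inl ⟨s, hs, (hS.mul_left_bruhatLT_iff hs x).2 hlt, _,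
      hleft s hs hlt, upLeft_singleton hS hs hlt⟩), Option.some_inj]
    ext y
    rw [Set.mem_inter_iff, mem_iInter_left_iff hS hleft, mem_iInter_right_iff hS hright,
      Set.mem_singleton_iff]
    refine ⟨fun h => by_contra fun hne => hK x y hx ⟨hne, ?_, ?_⟩, fun h => ?_⟩
    · exact fun s hs hlt => (h.1 s hs hlt).resolve_left hne
    · exact fun s hs hlt => (h.2 s hs hlt).resolve_left hne
    · exact ⟨fun _ _ _ => Or.inl h, fun _ _ _ => Or.inl h⟩

end Reduction

section Words

/-- The number of inversions of a list of natural numbers. -/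
def inversions : List ℕ → ℕ
  | [] => 0
  | a :: l => l.countP (· < a) + inversions l

/-- The list `l` with its entries at positions `i` and `i + 1` exchanged. -/
def swapAt : ℕ → List ℕ → List ℕ
  | 0, a :: b :: l => b :: a :: l
  | i + 1, a :: l => a :: swapAt i l
  | _, l => l

/-- The entry of `l` at position `i` exceeds the next one. -/
def DescentAt (l : List ℕ) (i : ℕ) : Prop := l.getD (i + 1) 0 < l.getD i 0
deriving Decidable

/-- The number of entries at least `j` among the first `k` entries of `l`. -/
def rank (l : List ℕ) (k j : ℕ) : ℕ := (l.take k).countP (j ≤ ·)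

/-- The rank (tableau) criterion for the Bruhat order on words of permutations. -/
def RankLE (l l' : List ℕ) : Prop :=
  ∀ k < l.length, ∀ j < l.length, rank l k j ≤ rank l' k j
deriving Decidable

theorem swapAt_perm (i : ℕ) (l : List ℕ) : (swapAt i l).Perm l := by
  fun_induction swapAt i l with
  | case1 a b l => exact .swap a b l
  | case2 i a l ih => exact ih.cons a
  | case3 => exact .refl _

theorem length_swapAt (i : ℕ) (l : List ℕ) : (swapAt i l).length = l.length :=
  (swapAt_perm i l).length_eq

theorem getElem?_swapAt {i : ℕ} {l : List ℕ} (hi : i + 1 < l.length) (k : ℕ) :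
    (swapAt i l)[k]? = l[Equiv.swap i (i + 1) k]? := by
  induction i generalizing l k with
  | zero =>
    match l, hi with
    | a :: b :: l, _ =>
      match k with
      | 0 => rfl
      | 1 => rfl
      | k + 2 => rw [Equiv.swap_apply_of_ne_of_ne (by omega) (by omega)]; rfl
  | succ i ih =>
    match l, hi with
    | a :: l, hi =>
      match k with
      | 0 => rw [Equiv.swap_apply_of_ne_of_ne (by omega) (by omega)]; rfl
      | k + 1 =>
        have hswap : Equiv.swap (i + 1) (i + 2) (k + 1) = Equiv.swap i (i + 1) k + 1 := by
          simp only [Equiv.swap_apply_def]; grind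
        rw [hswap]
        exact ih (by simpa using hi) k

theorem inversions_eq_zero {l : List ℕ} (h : l.Pairwise (· < ·)) : inversions l = 0 := by
  induction h with
  | nil => rfl
  | cons hlt _ ih =>
    rw [inversions, ih, add_zero, List.countP_eq_zero]
    exact fun b hb => by simpa using (hlt b hb).le

theorem inversions_swapAt {i : ℕ} {l : List ℕ} (hi : i + 1 < l.length) (h : l[i] < l[i + 1]) :
    inversions (swapAt i l) = inversions l + 1 := by
  induction i generalizing l with
  | zero =>
    match l, hi with
    | a :: b :: l, _ =>
      have hab : a < b := h
      simp only [swapAt, inversions, List.countP_cons, hab, hab.not_gt]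
      grind
  | succ i ih =>
    match l, hi with
    | a :: l, hi =>
      rw [swapAt, inversions, inversions, (swapAt_perm i l).countP_eq,
        ih (by simpa using hi) (by simpa using h), add_assoc]

theorem rank_swapAt_of_ne {i k : ℕ} (hk : k ≠ i + 1) (l : List ℕ) (j : ℕ) :
    rank (swapAt i l) k j = rank l k j := by
  fun_induction swapAt i l generalizing k with
  | case1 a b l =>
    match k with
    | 0 => rfl
    | k + 2 => simp [rank, List.countP_cons, add_right_comm]
  | case2 i a l ih =>
    match k with
    | 0 => rfl
    | k + 1 => simpa [rank, List.countP_cons] using ih (k := k) (by omega)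
  | case3 => rfl

theorem rank_succ {l : List ℕ} {k : ℕ} (hk : k < l.length) (j : ℕ) :
    rank l (k + 1) j = rank l k j + if j ≤ l[k] then 1 else 0 := by
  rw [rank, List.take_succ_eq_append_getElem hk, List.countP_append, List.countP_singleton]
  simp only [rank, decide_eq_true_eq]

theorem rank_le_rank_succ (l : List ℕ) (k j : ℕ) : rank l k j ≤ rank l (k + 1) j :=
  (List.take_sublist_take_left (Nat.le_succ k)).countP_le

theorem rank_succ_le (l : List ℕ) (k j : ℕ) : rank l (k + 1) j ≤ rank l k j + 1 := by
  obtain hk | hk := lt_or_ge k l.length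
  · rw [rank_succ hk]; split_ifs <;> omega
  · rw [rank, rank, List.take_of_length_le hk, List.take_of_length_le (by omega)]; omega

/-- After the swap at an ascent, the ranks at `i + 1` are the largest compatible with those at `i`
and `i + 2`. -/
theorem rank_le_rank_swapAt {l m : List ℕ} {i : ℕ} (hi : i + 1 < m.length) (h : m[i] < m[i + 1])
    (hrank : ∀ k ≠ i + 1, ∀ j, rank l k j ≤ rank m k j) (k j : ℕ) :
    rank l k j ≤ rank (swapAt i m) k j := by
  obtain hk | rfl := ne_or_eq k (i + 1)
  · exact (hrank k hk j).trans_eq (rank_swapAt_of_ne hk m j).symm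
  have hlen : i < (swapAt i m).length := by rw [length_swapAt]; omega
  have hget : (swapAt i m)[i] = m[i + 1] := by
    simpa [hi, hlen] using getElem?_swapAt hi i
  have hsucc : rank (swapAt i m) (i + 1) j = rank m i j + if j ≤ m[i + 1] then 1 else 0 := by
    rw [rank_succ hlen, rank_swapAt_of_ne (by omega), hget]
  have hsucc2 : rank m (i + 2) j =
      (rank m i j + if j ≤ m[i] then 1 else 0) + if j ≤ m[i + 1] then 1 else 0 := by
    rw [rank_succ hi, rank_succ]
  have hi0 := hrank i (by omega) j
  have hi2 := hrank (i + 2) (by omega) j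
  have hl0 := rank_succ_le l i j
  have hl1 : rank l (i + 1) j ≤ rank l (i + 2) j := rank_le_rank_succ l (i + 1) j
  split_ifs at hsucc hsucc2 <;> omega

/-- The one-line notation of the inverse of the permutation with one-line notation `l`. -/
def inverseWord (l : List ℕ) : List ℕ := (List.range l.length).map l.idxOf

/-- The positions at which `l` or, by the braid relations, any obstruction for `l` must have a
descent. -/
def ForcedAt (l : List ℕ) (i : ℕ) : Prop :=
  DescentAt l i ∨ (0 < i ∧ l.getD (i + 1) 0 < l.getD (i - 1) 0) ∨
    (i + 2 < l.length ∧ l.getD (i + 2) 0 < l.getD i 0)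
deriving Decidable

/-- The list of positions with `ForcedAt`. -/
def forced (l : List ℕ) : List ℕ := (List.range (l.length - 1)).filter (ForcedAt l)

/-- The prefixes of length `k`, stored in reverse, of the words generated by `below`. -/
def prefixes (L R x : List ℕ) : ℕ → List (List ℕ)
  | 0 => [[]]
  | k + 1 => (prefixes L R x k).flatMap fun p =>
    ((List.range (if k ∈ R then p.headD 0 else x.length)).filter fun v =>
      v ∉ p ∧ (v ∈ L → v + 1 ∈ p) ∧ p.countP (v ≤ ·) < rank x (k + 1) v).map (· :: p)

/-- Contains every word of a permutation below `x` in the rank order in which each value `v ∈ L`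
comes after `v + 1` and each position `k ∈ R` holds a smaller entry than the position before. -/
def below (L R x : List ℕ) : List (List ℕ) := (prefixes L R x x.length).map List.reverse

theorem reverse_take_mem_prefixes {L R x l : List ℕ} (hlen : l.length = x.length) (hl : l.Nodup)
    (hlt : ∀ v ∈ l, v < l.length) (hL : ∀ v ∈ L, v + 1 ∈ l.take (l.idxOf v))
    (hR : ∀ k ∈ R, ∃ i, k = i + 1 ∧ DescentAt l i) (hrank : ∀ k j, rank l k j ≤ rank x k j)
    {k : ℕ} (hk : k ≤ l.length) : (l.take k).reverse ∈ prefixes L R x k := by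
  induction k with
  | zero => simp [prefixes]
  | succ k ih =>
    have hkx : l[k] < if k ∈ R then (l.take k).reverse.headD 0 else x.length := by
      split_ifs with hkR
      · obtain ⟨i, rfl, hi⟩ := hR k hkR
        have hlast : (l.take (i + 1)).reverse.headD 0 = l[i] := by
          rw [List.take_succ_eq_append_getElem (show i < l.length by omega), List.reverse_append]
          rfl
        rw [hlast]
        rwa [DescentAt, List.getD_eq_getElem l 0 hk, List.getD_eq_getElem l 0 (by omega)] at hi
      · exact hlen ▸ hlt _ (List.getElem_mem _)
    have hnot : l[k] ∉ l.take k := by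
      have hnodup : (l.take k ++ [l[k]]).Nodup :=
        List.take_succ_eq_append_getElem hk ▸ hl.sublist (List.take_sublist _ _)
      exact List.disjoint_singleton.1 hnodup.disjoint
    have hcount : (l.take k).countP (l[k] ≤ ·) < rank x (k + 1) l[k] := by
      have := hrank (k + 1) l[k]
      rw [rank_succ hk, if_pos le_rfl] at this
      exact this
    have hL' : l[k] ∈ L → l[k] + 1 ∈ l.take k := fun h => by
      simpa only [hl.idxOf_getElem] using hL _ h
    rw [prefixes, List.mem_flatMap]
    refine ⟨_, ih (by omega), List.mem_map.2 ⟨l[k], ?_, ?_⟩⟩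
    · simp only [List.mem_filter, List.mem_range, List.mem_reverse, List.countP_reverse,
        decide_eq_true_eq]
      exact ⟨hkx, hnot, hL', hcount⟩
    · rw [List.take_succ_eq_append_getElem hk, List.reverse_append]; rfl

theorem mem_below {L R x l : List ℕ} (hlen : l.length = x.length) (hl : l.Nodup)
    (hlt : ∀ v ∈ l, v < l.length) (hL : ∀ v ∈ L, v + 1 ∈ l.take (l.idxOf v))
    (hR : ∀ k ∈ R, ∃ i, k = i + 1 ∧ DescentAt l i) (hrank : ∀ k j, rank l k j ≤ rank x k j) :
    l ∈ below L R x :=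
  List.mem_map.2 ⟨l.reverse, by
    have := reverse_take_mem_prefixes hlen hl hlt hL hR hrank le_rfl
    rwa [List.take_length, hlen] at this, l.reverse_reverse⟩

end Words

section SymmetricGroup

open Equiv

variable {n : ℕ}

/-- The simple reflection `s_i` of the symmetric group. -/
def adjSwap (i : Fin n) : Perm (Fin (n + 1)) := swap i.castSucc i.succ

/-- The set `S` of simple reflections of the symmetric group. -/
def adjSwaps (n : ℕ) : Set (Perm (Fin (n + 1))) := {σ | ∃ i : Fin n, σ = swap i.castSucc i.succ}

/-- The one-line notation of a permutation. -/
def word (σ : Perm (Fin (n + 1))) : List ℕ := List.ofFn fun i => (σ i : ℕ)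

theorem adjSwap_mem (i : Fin n) : adjSwap i ∈ adjSwaps n := ⟨i, rfl⟩

theorem signedGenerators_adjSwaps : SignedGenerators (adjSwaps n) where
  mul_self := by
    rintro _ ⟨i, rfl⟩
    exact swap_mul_self _ _
  closure_eq_top := by
    rw [← Perm.mclosure_swap_castSucc_succ n]
    congr
    ext σ
    exact exists_congr fun i => eq_comm
  exists_sign := by
    refine ⟨Perm.sign, ?_⟩
    rintro _ ⟨i, rfl⟩
    exact Perm.sign_swap i.castSucc_lt_succ.ne

theorem length_word (σ : Perm (Fin (n + 1))) : (word σ).length = n + 1 := List.length_ofFn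

theorem getElem_word (σ : Perm (Fin (n + 1))) {k : ℕ} (hk : k < (word σ).length) :
    (word σ)[k] = σ ⟨k, length_word σ ▸ hk⟩ := List.getElem_ofFn _

theorem getElem?_word {σ : Perm (Fin (n + 1))} {k : ℕ} (hk : k < n + 1) :
    (word σ)[k]? = some (σ ⟨k, hk⟩ : ℕ) := by
  rw [List.getElem?_eq_getElem (by rwa [length_word]), getElem_word]

theorem getD_word {σ : Perm (Fin (n + 1))} {k : ℕ} (hk : k < n + 1) :
    (word σ).getD k 0 = σ ⟨k, hk⟩ := by
  rw [List.getD_eq_getElem?_getD, getElem?_word hk]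
  rfl

theorem word_mul_adjSwap (σ : Perm (Fin (n + 1))) (i : Fin n) :
    word (σ * adjSwap i) = swapAt i (word σ) := by
  refine List.ext_getElem? fun k => ?_
  rw [getElem?_swapAt (by rw [length_word]; omega), swap_apply_def]
  by_cases hk : k < n + 1
  · have hmul : (σ * adjSwap i) ⟨k, hk⟩ = σ (swap i.castSucc i.succ ⟨k, hk⟩) := rfl
    rw [getElem?_word hk, hmul, swap_apply_def]
    simp only [Fin.ext_iff, Fin.val_castSucc, Fin.val_succ]
    split_ifs <;> rw [getElem?_word] <;> rfl
  · rw [List.getElem?_eq_none (by rw [length_word]; omega), List.getElem?_eq_none]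
    rw [length_word]
    split_ifs <;> omega

theorem word_one : word (1 : Perm (Fin (n + 1))) = List.range (n + 1) :=
  List.ext_getElem (by simp [length_word]) fun k _ _ => by simp [getElem_word]

theorem word_injective : Function.Injective (word (n := n)) := fun σ τ h => by
  ext i
  exact congrFun (List.ofFn_injective h) i

theorem nodup_word (σ : Perm (Fin (n + 1))) : (word σ).Nodup :=
  List.nodup_ofFn.2 (Fin.val_injective.comp σ.injective)

theorem mem_word {σ : Perm (Fin (n + 1))} {v : ℕ} : v ∈ word σ ↔ v < n + 1 := by
  rw [word, List.mem_ofFn]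
  exact ⟨fun ⟨i, hi⟩ => hi ▸ (σ i).isLt, fun hv => ⟨σ⁻¹ ⟨v, hv⟩, by simp⟩⟩

theorem descentAt_word {σ : Perm (Fin (n + 1))} {i : Fin n} :
    DescentAt (word σ) i ↔ σ i.succ < σ i.castSucc := by
  rw [DescentAt, getD_word (Nat.add_lt_add_right i.isLt 1),
    getD_word (Nat.lt_succ_of_lt i.isLt)]
  rfl

theorem inversions_word_mul_adjSwap {σ : Perm (Fin (n + 1))} {i : Fin n}
    (h : σ i.castSucc < σ i.succ) :
    inversions (word (σ * adjSwap i)) = inversions (word σ) + 1 := by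
  rw [word_mul_adjSwap]
  refine inversions_swapAt (by rw [length_word]; omega) ?_
  rw [getElem_word, getElem_word]
  exact h

theorem mul_adjSwap_mul_adjSwap (σ : Perm (Fin (n + 1))) (i : Fin n) :
    σ * adjSwap i * adjSwap i = σ :=
  signedGenerators_adjSwaps.mul_mul_cancel_right (adjSwap_mem i) σ

theorem mul_adjSwap_castSucc (σ : Perm (Fin (n + 1))) (i : Fin n) :
    (σ * adjSwap i) i.castSucc = σ i.succ := congrArg σ (swap_apply_left _ _)

theorem mul_adjSwap_succ (σ : Perm (Fin (n + 1))) (i : Fin n) :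
    (σ * adjSwap i) i.succ = σ i.castSucc := congrArg σ (swap_apply_right _ _)

theorem inversions_word_of_descent {σ : Perm (Fin (n + 1))} {i : Fin n}
    (h : σ i.succ < σ i.castSucc) :
    inversions (word σ) = inversions (word (σ * adjSwap i)) + 1 := by
  rw [← inversions_word_mul_adjSwap (by rwa [mul_adjSwap_castSucc, mul_adjSwap_succ]),
    mul_adjSwap_mul_adjSwap]

theorem exists_succ_lt_castSucc {σ : Perm (Fin (n + 1))} (hσ : σ ≠ 1) :
    ∃ i : Fin n, σ i.succ < σ i.castSucc := by
  by_contra! h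
  have hmono : StrictMono σ := Fin.strictMono_iff_lt_succ.2 fun i =>
    (h i).lt_of_ne (σ.injective.ne i.castSucc_lt_succ.ne)
  refine hσ (Equiv.ext fun i => ?_)
  exact DFunLike.congr_fun (Subsingleton.elim (hmono.orderIsoOfSurjective σ σ.surjective)
    (OrderIso.refl _)) i

theorem wordLength_adjSwaps (σ : Perm (Fin (n + 1))) :
    wordLength (adjSwaps n) σ = inversions (word σ) := by
  refine signedGenerators_adjSwaps.wordLength_eq (g := fun σ => inversions (word σ)) ?_ ?_ ?_ σ
  · rw [word_one]
    exact inversions_eq_zero List.pairwise_lt_range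
  · rintro σ _ ⟨i, rfl⟩
    obtain h | h := lt_or_gt_of_ne (σ.injective.ne i.castSucc_lt_succ.ne)
    · exact (inversions_word_mul_adjSwap h).le
    · exact (Nat.le_succ _).trans ((inversions_word_of_descent h).ge.trans (Nat.le_succ _))
  · intro σ hσ
    obtain ⟨i, hi⟩ := exists_succ_lt_castSucc hσ
    exact ⟨adjSwap i, adjSwap_mem i, (inversions_word_of_descent hi).ge⟩

theorem wordLength_mul_adjSwap_lt_iff {σ : Perm (Fin (n + 1))} {i : Fin n} :
    wordLength (adjSwaps n) (σ * adjSwap i) < wordLength (adjSwaps n) σ ↔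
      σ i.succ < σ i.castSucc := by
  rw [wordLength_adjSwaps, wordLength_adjSwaps]
  obtain h | h := lt_or_gt_of_ne (σ.injective.ne i.castSucc_lt_succ.ne)
  · exact iff_of_false (by rw [inversions_word_mul_adjSwap h]; omega) h.not_gt
  · exact iff_of_true (by rw [inversions_word_of_descent h]; omega) h

theorem idxOf_word (σ : Perm (Fin (n + 1))) {v : ℕ} (hv : v < n + 1) :
    (word σ).idxOf v = σ⁻¹ ⟨v, hv⟩ := by
  have hget : (word σ)[(σ⁻¹ ⟨v, hv⟩ : ℕ)]'(by rw [length_word]; exact Fin.isLt _) = v := by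
    simp [getElem_word]
  conv_lhs => rw [← hget]
  rw [(nodup_word σ).idxOf_getElem]

theorem inverseWord_word (σ : Perm (Fin (n + 1))) : inverseWord (word σ) = word σ⁻¹ := by
  refine List.ext_getElem (by simp [inverseWord, length_word]) fun k _ hk => ?_
  simp only [inverseWord, List.getElem_map, List.getElem_range, getElem_word]
  exact idxOf_word σ (length_word σ⁻¹ ▸ hk)

theorem succ_mem_take_idxOf_word {σ : Perm (Fin (n + 1))} {i : Fin n}
    (h : σ⁻¹ i.succ < σ⁻¹ i.castSucc) :
    (i : ℕ) + 1 ∈ (word σ).take ((word σ).idxOf (i : ℕ)) := by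
  rw [idxOf_word σ (Nat.lt_succ_of_lt i.isLt), List.mem_take_iff_getElem]
  refine ⟨σ⁻¹ i.succ, lt_min h (by rw [length_word]; exact Fin.isLt _), ?_⟩
  simp [getElem_word]

theorem mem_below_word {L R : List ℕ} {x y : Perm (Fin (n + 1))}
    (hL : ∀ v ∈ L, v + 1 ∈ (word y).take ((word y).idxOf v))
    (hR : ∀ k ∈ R, ∃ i, k = i + 1 ∧ DescentAt (word y) i)
    (hrank : ∀ k j, rank (word y) k j ≤ rank (word x) k j) : word y ∈ below L R (word x) :=
  mem_below (by rw [length_word, length_word]) (nodup_word y)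
    (fun v hv => by rw [length_word]; exact mem_word.1 hv) hL hR hrank

variable (K : KLData (adjSwaps n))

/-- Left multiplication by `h_s` for the simple reflection `s = s_i`. -/
def mulLeft (i : Fin n) : GenMul K := .left signedGenerators_adjSwaps K (adjSwap_mem i)

/-- Right multiplication by `h_s` for the simple reflection `s = s_i`. -/
def mulRight (i : Fin n) : GenMul K := .right signedGenerators_adjSwaps K (adjSwap_mem i)

variable {K}

theorem mulRight_descent_iff {i : Fin n} {σ : Perm (Fin (n + 1))} :
    (mulRight K i).Descent σ ↔ σ i.succ < σ i.castSucc :=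
  wordLength_mul_adjSwap_lt_iff

theorem mulLeft_descent_iff {i : Fin n} {σ : Perm (Fin (n + 1))} :
    (mulLeft K i).Descent σ ↔ σ⁻¹ i.succ < σ⁻¹ i.castSucc := by
  rw [← wordLength_mul_adjSwap_lt_iff, GenMul.Descent,
    ← signedGenerators_adjSwaps.wordLength_inv ((mulLeft K i).act σ),
    ← signedGenerators_adjSwaps.wordLength_inv σ]
  rfl

theorem rank_word_le_of_mul_adjSwap {w y : Perm (Fin (n + 1))} {i : Fin n}
    (hi : w i.succ < w i.castSucc)
    (h : ∀ k ≠ (i : ℕ) + 1, ∀ j, rank (word y) k j ≤ rank (word (w * adjSwap i)) k j) (k j : ℕ) :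
    rank (word y) k j ≤ rank (word w) k j := by
  rw [← mul_adjSwap_mul_adjSwap w i, word_mul_adjSwap]
  refine rank_le_rank_swapAt (by rw [length_word]; omega) ?_ h k j
  rw [getElem_word, getElem_word]
  exact ((mul_adjSwap_castSucc w i).trans_lt hi).trans_eq (mul_adjSwap_succ w i).symm

theorem rank_word_le_of_klb_ne_zero {w y : Perm (Fin (n + 1))} (h : K.klb w y ≠ 0) (k j : ℕ) :
    rank (word y) k j ≤ rank (word w) k j := by
  induction hl : wordLength (adjSwaps n) w using Nat.strong_induction_on generalizing w y k j with
  | _ l ih =>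
    by_cases hw : w = 1
    · obtain rfl : y = w := (eq_or_wordLength_lt_of_klb_ne_zero K h).resolve_right (by
        rw [hw, wordLength_one]
        exact Nat.not_lt_zero _)
      exact le_rfl
    obtain ⟨i, hi⟩ := exists_succ_lt_castSucc hw
    let a := mulRight K i
    let v := a.act w
    have hlt : wordLength (adjSwaps n) v < l := hl ▸ mulRight_descent_iff.2 hi
    have hv : ¬ a.Descent v := by
      rw [GenMul.descent_act_iff, not_not]
      exact mulRight_descent_iff.2 hi
    refine rank_word_le_of_mul_adjSwap hi (fun k hk j => ?_) k j
    rw [← a.act_act w] at h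
    obtain h | h | ⟨z, hz, h⟩ := GenMul.of_klb_act_ne_zero hv h
    · have hact : word (a.act y) = swapAt i (word y) := word_mul_adjSwap y i
      rw [← rank_swapAt_of_ne hk (word y), ← hact]
      exact ih _ hlt h k j rfl
    · exact ih _ hlt h k j rfl
    · exact (ih _ ((wordLength_lt_of_mu_ne_zero hz).trans hlt) h k j rfl).trans
        (ih _ hlt (klb_ne_zero_of_mu_ne_zero hz) k j rfl)

theorem adjSwap_braid {i j : Fin n} (hij : i.succ = j.castSucc) :
    adjSwap i * adjSwap j * adjSwap i = adjSwap j * adjSwap i * adjSwap j := by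
  have hi : i.castSucc ≠ i.succ := i.castSucc_lt_succ.ne
  have hj : j.castSucc ≠ j.succ := j.castSucc_lt_succ.ne
  have hne : i.castSucc ≠ j.succ :=
    (i.castSucc_lt_succ.trans_eq hij |>.trans j.castSucc_lt_succ).ne
  rw [← hij] at hj
  rw [adjSwap, adjSwap, ← hij, swap_mul_swap_mul_swap hi hne, swap_comm i.castSucc,
    swap_comm i.succ j.succ, swap_mul_swap_mul_swap hj.symm hne.symm, swap_comm]

/-- After the identification `φ` of the group with itself, which is the identity for right and the
inversion for left multiplication, the generators `g i` permute the positions of a word. -/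
structure ActsOnPositions (φ : Perm (Fin (n + 1)) ≃ Perm (Fin (n + 1))) (g : Fin n → GenMul K) :
    Prop where
  map_act : ∀ i x, φ ((g i).act x) = φ x * adjSwap i
  descent_iff : ∀ i x, (g i).Descent x ↔ φ x i.succ < φ x i.castSucc

theorem actsOnPositions_mulRight : ActsOnPositions (Equiv.refl _) (mulRight K) where
  map_act _ _ := rfl
  descent_iff _ _ := mulRight_descent_iff

theorem actsOnPositions_mulLeft : ActsOnPositions (Equiv.inv _) (mulLeft K) where
  map_act i x := mul_inv_rev (adjSwap i) x
  descent_iff _ _ := mulLeft_descent_iff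

namespace ActsOnPositions

variable {φ : Perm (Fin (n + 1)) ≃ Perm (Fin (n + 1))} {g : Fin n → GenMul K}
  {x y : Perm (Fin (n + 1))}

theorem braid (hg : ActsOnPositions φ g) {i j : Fin n} (hij : i.succ = j.castSucc)
    (z : Perm (Fin (n + 1))) :
    (g i).act ((g j).act ((g i).act z)) = (g j).act ((g i).act ((g j).act z)) := by
  apply φ.injective
  simp only [hg.map_act, mul_assoc]
  simp only [← mul_assoc, adjSwap_braid hij]

theorem descent_and_descent (hg : ActsOnPositions φ g)
    (hxy : ∀ i, (g i).Descent x → (g i).Descent y ∧ mu K y ((g i).act x) ≠ 0) {i j : Fin n}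
    (hij : i.succ = j.castSucc) (hlt : φ x j.succ < φ x i.castSucc) :
    (g i).Descent y ∧ (g j).Descent y := by
  have hne : i.castSucc ≠ j.succ :=
    (i.castSucc_lt_succ.trans_eq hij |>.trans j.castSucc_lt_succ).ne
  obtain hlt' | hlt' := lt_or_gt_of_ne (φ x |>.injective.ne i.castSucc_lt_succ.ne)
  · have hj : (g j).Descent x := (hg.descent_iff j x).2 (hij ▸ hlt.trans hlt')
    have hji : (g i).Descent ((g j).act x) := by
      rw [hg.descent_iff, hg.map_act, hij, mul_adjSwap_castSucc, Perm.mul_apply,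
        adjSwap, swap_apply_of_ne_of_ne (hij ▸ i.castSucc_lt_succ.ne) hne]
      exact hlt
    exact ⟨GenMul.descent_of_braid (fun z => (hg.braid hij z).symm) hj (hxy j hj).1 (hxy j hj).2
      hji fun hi => (hxy i hi).1, (hxy j hj).1⟩
  · have hi : (g i).Descent x := (hg.descent_iff i x).2 hlt'
    have hij' : (g j).Descent ((g i).act x) := by
      rw [hg.descent_iff, hg.map_act, ← hij, mul_adjSwap_succ, Perm.mul_apply,
        adjSwap, swap_apply_of_ne_of_ne hne.symm (hij ▸ j.castSucc_lt_succ.ne')]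
      exact hlt
    exact ⟨(hxy i hi).1, GenMul.descent_of_braid (hg.braid hij) hi (hxy i hi).1 (hxy i hi).2
      hij' fun hj => (hxy j hj).1⟩

theorem descentAt_of_mem_forced (hg : ActsOnPositions φ g)
    (hxy : ∀ i, (g i).Descent x → (g i).Descent y ∧ mu K y ((g i).act x) ≠ 0) {i : ℕ}
    (hi : i ∈ forced (word (φ x))) : i < n ∧ DescentAt (word (φ y)) i := by
  obtain ⟨hin, hforced⟩ : i < n ∧ ForcedAt (word (φ x)) i := by
    simpa [forced, length_word] using hi
  refine ⟨hin, (descentAt_word (i := ⟨i, hin⟩)).2 ((hg.descent_iff _ y).1 ?_)⟩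
  obtain h | ⟨hpos, h⟩ | ⟨hlt, h⟩ := hforced
  · exact (hxy _ ((hg.descent_iff _ x).2 ((descentAt_word (i := ⟨i, hin⟩)).1 h))).1
  · rw [getD_word (by omega), getD_word (by omega)] at h
    exact (hg.descent_and_descent hxy (i := ⟨i - 1, by omega⟩) (j := ⟨i, hin⟩)
      (Fin.ext (Nat.sub_add_cancel hpos)) h).2
  · rw [length_word] at hlt
    rw [getD_word (by omega), getD_word (by omega)] at h
    exact (hg.descent_and_descent hxy (i := ⟨i, hin⟩) (j := ⟨i + 1, by omega⟩) rfl h).1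

end ActsOnPositions

theorem rankLE_of_klb_ne_zero {w y : Perm (Fin (n + 1))} (h : K.klb w y ≠ 0) :
    RankLE (word y) (word w) :=
  fun k _ j _ => rank_word_le_of_klb_ne_zero h k j

/-- A descent `t` of `w` which `y` lacks forces `μ(y, w) = 0` unless `w = y s_t`. -/
def MuVanishes (n : ℕ) (y w : List ℕ) : Prop :=
  ∃ t < n, DescentAt w t ∧ ¬ DescentAt y t ∧ swapAt t y ≠ w
deriving Decidable

/-- A sufficient condition for `μ(y, v s_r) = 0`, for a descent `r` of `y` which is not one of `v`:
the three parts make the hypotheses of `GenMul.mu_act_eq_zero` checkable on words. -/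
def MuVanishesVia (n r : ℕ) (y v : List ℕ) : Prop :=
  MuVanishes n (swapAt r y) v ∧
    (¬ RankLE y v ∨ ∃ a < n, DescentAt v a ∧ ¬ DescentAt y a ∧ MuVanishes n (swapAt a y) v) ∧
    ∀ z ∈ below [] [r + 1] v, RankLE y z → RankLE z v → z = y
deriving Decidable

/-- A sufficient condition for `y` not to be an obstruction for `x`: their lengths have different
parities, or `μ(y, x s) = 0` for some descent `s` of `x` by one of the criteria above. -/
def RuledOut (n : ℕ) (x y : List ℕ) : Prop :=
  y = x ∨ Odd (inversions x + inversions y) ∨ ∃ s < n, DescentAt x s ∧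
    (¬ RankLE y (swapAt s x) ∨ MuVanishes n y (swapAt s x) ∨
      ∃ r < n, DescentAt (swapAt s x) r ∧ DescentAt y r ∧
        MuVanishesVia n r y (swapAt r (swapAt s x)))
deriving Decidable

theorem MuVanishes.mu_eq_zero {w y : Perm (Fin (n + 1))} (h : MuVanishes n (word y) (word w)) :
    mu K y w = 0 := by
  obtain ⟨t, ht, hw, hy, hne⟩ := h
  let i : Fin n := ⟨t, ht⟩
  by_contra hmu
  have hact : (mulRight K i).act y = w := GenMul.act_eq_of_mu_ne_zero
    (mulRight_descent_iff.2 (descentAt_word.1 hw))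
    (mt (descentAt_word.2 <| mulRight_descent_iff.1 ·) hy) hmu
  exact hne ((word_mul_adjSwap y i).symm.trans (congrArg word hact))

theorem MuVanishesVia.mu_eq_zero {v y : Perm (Fin (n + 1))} {r : Fin n}
    (hv : v r.castSucc < v r.succ) (hy : y r.succ < y r.castSucc)
    (h : MuVanishesVia n r (word y) (word v)) : mu K y (v * adjSwap r) = 0 := by
  obtain ⟨hmu, hcoeff, hbetween⟩ := h
  have hv' : ¬ (mulRight K r).Descent v := by rw [mulRight_descent_iff]; exact hv.not_gt
  refine GenMul.mu_act_eq_zero hv' (mulRight_descent_iff.2 hy) ?_ ?_ ?_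
  · obtain hrank | ⟨t, ht, hvt, hyt, hmu⟩ := hcoeff
    · rw [not_imp_comm.1 rankLE_of_klb_ne_zero hrank]
      rfl
    · let i : Fin n := ⟨t, ht⟩
      rw [GenMul.coeff_neg_two_klb (a := mulRight K i)
        (mulRight_descent_iff.2 (descentAt_word.1 hvt))
        (mt (descentAt_word.2 <| mulRight_descent_iff.1 ·) hyt)]
      exact MuVanishes.mu_eq_zero (word_mul_adjSwap y i ▸ hmu)
  · exact MuVanishes.mu_eq_zero (word_mul_adjSwap y r ▸ hmu)
  · intro z hz hzv hyz
    refine word_injective (hbetween _ ?_ (rankLE_of_klb_ne_zero hyz)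
      (rankLE_of_klb_ne_zero (klb_ne_zero_of_mu_ne_zero hzv)))
    refine mem_below_word (by simp) ?_
      (rank_word_le_of_klb_ne_zero (klb_ne_zero_of_mu_ne_zero hzv))
    simpa [descentAt_word] using mulRight_descent_iff.1 hz

theorem Obstruction.not_ruledOut {x y : Perm (Fin (n + 1))} (hx : x ≠ 1) (h : Obstruction K x y) :
    ¬ RuledOut n (word x) (word y) := by
  have hright (i : Fin n) (hi : x i.succ < x i.castSucc) :
      y i.succ < y i.castSucc ∧ mu K y (x * adjSwap i) ≠ 0 :=
    (h.right _ (adjSwap_mem i) (wordLength_mul_adjSwap_lt_iff.2 hi)).imp_left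
      wordLength_mul_adjSwap_lt_iff.1
  rintro (heq | hodd | ⟨s, hs, hxs, hruled⟩)
  · exact h.ne (word_injective heq)
  · obtain ⟨i, hi⟩ := exists_succ_lt_castSucc hx
    have heven := even_of_coeff_klb_ne_zero signedGenerators_adjSwaps (hright i hi).2
    rw [inversions_word_of_descent hi, ← wordLength_adjSwaps, ← wordLength_adjSwaps] at hodd
    grind
  · let i : Fin n := ⟨s, hs⟩
    have hmu := (hright i (descentAt_word.1 hxs)).2
    have hword : word (x * adjSwap i) = swapAt s (word x) := word_mul_adjSwap x i
    rw [← hword] at hruled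
    obtain hrank | hvan | ⟨r, hr, hxr, hyr, hvia⟩ := hruled
    · exact hrank (rankLE_of_klb_ne_zero (klb_ne_zero_of_mu_ne_zero hmu))
    · exact hmu hvan.mu_eq_zero
    · let j : Fin n := ⟨r, hr⟩
      have hword' : word (x * adjSwap i * adjSwap j) = swapAt r (word (x * adjSwap i)) :=
        word_mul_adjSwap _ j
      rw [← hword'] at hvia
      refine hmu ?_
      rw [← mul_adjSwap_mul_adjSwap (x * adjSwap i) j]
      refine MuVanishesVia.mu_eq_zero ?_ (descentAt_word.1 hyr) hvia
      rw [mul_adjSwap_castSucc, mul_adjSwap_succ]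
      exact descentAt_word.1 hxr

theorem Obstruction.mem_below {x y : Perm (Fin (n + 1))} (hx : x ≠ 1) (h : Obstruction K x y) :
    word y ∈ below (forced (inverseWord (word x))) ((forced (word x)).map (· + 1)) (word x) := by
  obtain ⟨i, hi⟩ := exists_succ_lt_castSucc hx
  have hmu := (h.right _ (adjSwap_mem i) (wordLength_mul_adjSwap_lt_iff.2 hi)).2
  refine mem_below_word ?_ ?_ (rank_word_le_of_mul_adjSwap hi fun k _ j =>
    rank_word_le_of_klb_ne_zero (klb_ne_zero_of_mu_ne_zero hmu) k j)
  · intro v hv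
    rw [inverseWord_word] at hv
    obtain ⟨hvn, hdesc⟩ := actsOnPositions_mulLeft.descentAt_of_mem_forced
      (fun j => h.left _ (adjSwap_mem j)) hv
    exact succ_mem_take_idxOf_word (i := ⟨v, hvn⟩) (descentAt_word.1 hdesc)
  · intro k hk
    obtain ⟨j, hj, rfl⟩ := List.mem_map.1 hk
    exact ⟨j, rfl, (actsOnPositions_mulRight.descentAt_of_mem_forced
      (fun j => h.right _ (adjSwap_mem j)) hj).2⟩

/-- All candidates for an obstruction for `x` are ruled out. -/
def AllRuledOut (n : ℕ) (x : List ℕ) : Prop := x ≠ List.range (n + 1) →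
  ∀ y ∈ below (forced (inverseWord x)) ((forced x).map (· + 1)) x, RuledOut n x y
deriving Decidable

set_option maxHeartbeats 4000000 in
-- The kernel evaluates the search on all words of length at most 7.
theorem allRuledOut_of_mem_permutations (n : ℕ) (hn : n ≤ 6) (a : ℕ) (ha : a ≤ n) :
    ∀ t ∈ ((List.range (n + 1)).erase a).permutations', AllRuledOut n (a :: t) := by
  interval_cases n <;> interval_cases a <;> decide +kernel

theorem allRuledOut_word (hn : n ≤ 6) (x : Perm (Fin (n + 1))) : AllRuledOut n (word x) := by
  have hperm : (word x).Perm (List.range (n + 1)) := by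
    rw [List.perm_ext_iff_of_nodup (nodup_word x) List.nodup_range]
    exact fun v => mem_word.trans List.mem_range.symm
  cases hw : word x with
  | nil => exact absurd ((length_word x).symm.trans (congrArg List.length hw)) n.succ_ne_zero
  | cons a t =>
    rw [hw, List.cons_perm_iff_perm_erase] at hperm
    exact allRuledOut_of_mem_permutations n hn a (Nat.lt_succ_iff.1 (List.mem_range.1 hperm.1)) t
      (List.mem_permutations'.2 hperm.2)

theorem not_obstruction (hn : n ≤ 6) {x y : Perm (Fin (n + 1))} (hx : x ≠ 1) :
    ¬ Obstruction K x y := fun h =>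
  h.not_ruledOut hx (allRuledOut_word hn x (fun hw => hx (word_injective (hw.trans word_one.symm)))
    _ (h.mem_below hx))

end SymmetricGroup

end KLPaper

open KLPaper in
theorem statement_3 (n : ℕ) (hn : n ≤ 6)
    (S : Set (Equiv.Perm (Fin (n + 1))))
    (hS : S = {σ : Equiv.Perm (Fin (n + 1)) | ∃ i : Fin n, σ = Equiv.swap i.castSucc i.succ})
    (K : KLData S) :
    (∀ x : Equiv.Perm (Fin (n + 1)), ∃ F : Set (Equiv.Perm (Fin (n + 1))), fW K x = some F) ∧
    sigma' K = Set.univ := by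
  obtain rfl : S = adjSwaps n := hS
  have hfW (x : Equiv.Perm (Fin (n + 1))) : fW K x = some {x} :=
    fW_eq_singleton signedGenerators_adjSwaps (fun _ _ => not_obstruction hn) x
  exact ⟨fun x => ⟨{x}, hfW x⟩, Set.eq_univ_of_forall hfW⟩
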